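/- Let G be a Hausdorff weakly Lindelöf paratopological group with Hausdorff number Hs(G) ≤ ω. If G is ω-balanced, then for any continuous real-valued function f on G one can find a continuous d-open surjective homomorphism π : G → K onto a regular paratopological group K whose identity is the intersection of countably many open sets, and a continuous function h : K → ℝ such that f = h ∘ π. -/

import Mathlib

open Topology TopologicalSpace Pointwise Function Set

/-- A space is weakly Lindelöf if every open cover has a countable subfamily with dense union. -/
def WeaklyLindelof (X : Type*) [TopologicalSpace X] : Prop :=
  ∀ 𝒰 : Set (Set X), (∀ U ∈ 𝒰, IsOpen U) → ⋃₀ 𝒰 = Set.univ →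
    ∃ 𝒱 ⊆ 𝒰, 𝒱.Countable ∧ Dense (⋃₀ 𝒱)

/-- A (para)topological group is ω-balanced if every neighborhood of the identity admits a
countable subordinated family of open neighborhoods of the identity. -/
def OmegaBalanced (G : Type*) [Group G] [TopologicalSpace G] : Prop :=
  ∀ U ∈ 𝓝 (1 : G), ∃ V : ℕ → Set G,
    (∀ n, IsOpen (V n) ∧ (1 : G) ∈ V n) ∧
      ∀ g : G, ∃ n, (fun x => g * x * g⁻¹) '' V n ⊆ U

/-- Countable Hausdorff number: Hs(G) ≤ ω. -/
def HsCountable (G : Type*) [Group G] [TopologicalSpace G] : Prop :=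
  ∀ U ∈ 𝓝 (1 : G), ∃ V : ℕ → Set G,
    (∀ n, IsOpen (V n) ∧ (1 : G) ∈ V n) ∧ (⋂ n, V n * (V n)⁻¹) ⊆ U

/-!
Weak Lindelöfness bounds the oscillation of `f` along the members of a countably generated filter
coarser than `𝓝 1`, and every such filter can be refined countably many times until it is
subordinate to itself. The kernel `N` of the resulting filter is a normal subgroup of periods of
`f`, and `G ⧸ N` is Hausdorff, with a countable family of neighborhoods of the identity that
separates it from every other point. The quotient need not be regular, but its semiregularization
is: a paratopological group satisfies `closure U * V = U * V` for open `V`, so regular open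
neighborhoods contain closures of open ones. Semiregularization keeps the multiplication and the
maps to regular spaces continuous, and weakens the openness of the quotient map only to
`d`-openness. Finally, weak Lindelöfness codes the cosets of `N` by subsets of a countable set, so
that the quotient has a copy in every universe.
-/

universe w

section Subordinate

open Filter

variable {G : Type*} [Group G]

/-- A filter `𝓖` on a group is subordinate to `𝓕` if passing from `𝓕` to `𝓖` halves the members of
`𝓕`, absorbs conjugations and separates the points outside the kernel of `𝓕` from the identity.
A self-subordinate filter plays the role of the neighborhoods of the identity in a coarser, possibly
non-Hausdorff, paratopological group topology. -/
structure IsSubordinate (𝓖 𝓕 : Filter G) : Prop where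
  mul_le : 𝓖 * 𝓖 ≤ 𝓕
  tendsto_conj (g : G) : Tendsto (fun x => g * x * g⁻¹) 𝓖 𝓕
  ker_div_subset : (𝓖 / 𝓖).ker ⊆ 𝓕.ker

namespace IsSubordinate

theorem mono_left {𝓖 𝓖' 𝓕 : Filter G} (h : IsSubordinate 𝓖 𝓕) (h' : 𝓖' ≤ 𝓖) :
    IsSubordinate 𝓖' 𝓕 where
  mul_le := (mul_le_mul' h' h').trans h.mul_le
  tendsto_conj g := (h.tendsto_conj g).mono_left h'
  ker_div_subset := (ker_mono (Filter.div_le_div h' h')).trans h.ker_div_subset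

protected theorem iInf {ι : Sort*} {𝓖 𝓕 : ι → Filter G} (h : ∀ i, IsSubordinate (𝓖 i) (𝓕 i)) :
    IsSubordinate (⨅ i, 𝓖 i) (⨅ i, 𝓕 i) where
  mul_le := le_iInf fun i => ((h i).mono_left (iInf_le 𝓖 i)).mul_le
  tendsto_conj g := tendsto_iInf.2 fun i => ((h i).mono_left (iInf_le 𝓖 i)).tendsto_conj g
  ker_div_subset := by
    rw [ker_iInf]
    exact subset_iInter fun i => ((h i).mono_left (iInf_le 𝓖 i)).ker_div_subset

variable {𝓕 : Filter G}

theorem one_mem_ker [NeBot 𝓕] (h : IsSubordinate 𝓕 𝓕) : 1 ∈ 𝓕.ker := by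
  refine h.ker_div_subset (mem_ker.2 fun s hs => ?_)
  obtain ⟨U, hU, V, hV, hUV⟩ := Filter.mem_div.1 hs
  obtain ⟨a, haU, haV⟩ := Filter.nonempty_of_mem (inter_mem hU hV)
  exact hUV ⟨a, haU, a, haV, div_self' a⟩

/-- The kernel of a self-subordinate filter, as a subgroup. -/
def kerSubgroup [NeBot 𝓕] (h : IsSubordinate 𝓕 𝓕) : Subgroup G where
  carrier := 𝓕.ker
  one_mem' := h.one_mem_ker
  mul_mem' {a b} ha hb := mem_ker.2 fun s hs => by
    obtain ⟨U, hU, V, hV, hUV⟩ := Filter.mem_mul.1 (h.mul_le hs)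
    exact hUV (mul_mem_mul (mem_ker.1 ha U hU) (mem_ker.1 hb V hV))
  inv_mem' {a} ha := h.ker_div_subset <| mem_ker.2 fun s hs => by
    obtain ⟨U, hU, V, hV, hUV⟩ := Filter.mem_div.1 hs
    exact hUV ⟨1, mem_ker.1 h.one_mem_ker U hU, a, mem_ker.1 ha V hV, one_div a⟩

instance normal_kerSubgroup [NeBot 𝓕] (h : IsSubordinate 𝓕 𝓕) : h.kerSubgroup.Normal where
  conj_mem _ ha g := mem_ker.2 fun _ hs => mem_ker.1 ha _ (h.tendsto_conj g hs)

/-- If `x * a` and `y * b` agree modulo the kernel, then `x⁻¹ * y = (a * n) / b` with `n` in the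
kernel, and `a * n` is as small as `a`. -/
theorem disjoint_map {H : Type*} [Group H] [NeBot 𝓕] (h : IsSubordinate 𝓕 𝓕) {p : G →* H}
    (hp : (p.ker : Set G) = 𝓕.ker) {x y : G} (hxy : p x ≠ p y) :
    Disjoint (map (fun a => p (x * a)) 𝓕) (map (fun b => p (y * b)) 𝓕) := by
  have hxy' : x⁻¹ * y ∉ 𝓕.ker := by
    rwa [← hp, SetLike.mem_coe, p.mem_ker, map_mul, map_inv, inv_mul_eq_one]
  obtain ⟨s, hs, hxys⟩ : ∃ s ∈ 𝓕 / 𝓕, x⁻¹ * y ∉ s := by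
    by_contra! hk
    exact hxy' (h.ker_div_subset (mem_ker.2 hk))
  obtain ⟨U, hU, V, hV, hUV⟩ := Filter.mem_div.1 hs
  obtain ⟨A, hA, B, hB, hAB⟩ := Filter.mem_mul.1 (h.mul_le hU)
  refine disjoint_of_disjoint_of_mem ?_ (image_mem_map hA) (image_mem_map hV)
  refine disjoint_left.2 ?_
  rintro _ ⟨a, ha, rfl⟩ ⟨b, hb, hab⟩
  have hker : (x * a)⁻¹ * (y * b) ∈ 𝓕.ker := by
    rwa [← hp, SetLike.mem_coe, p.mem_ker, map_mul, map_inv, inv_mul_eq_one, eq_comm]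
  refine hxys (hUV ⟨_, hAB (mul_mem_mul ha (mem_ker.1 hker B hB)), b, hb, ?_⟩)
  rw [div_eq_iff_eq_mul]
  group

/-- Writing `u = x⁻¹ * (y * q * a⁻¹) * x * p` and `v = q * (a⁻¹ * (x * p))`, one has
`x⁻¹ * y = u / v`. -/
theorem inv_mul_mem_ker (h : IsSubordinate 𝓕 𝓕) {x y : G}
    (hxy : ∀ U ∈ 𝓕, ∃ a, ∃ p ∈ U, ∃ q ∈ U, a⁻¹ * (x * p) ∈ U ∧ y * q * a⁻¹ ∈ U) :
    x⁻¹ * y ∈ 𝓕.ker := by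
  refine h.ker_div_subset (mem_ker.2 fun s hs => ?_)
  obtain ⟨U, hU, V, hV, hUV⟩ := Filter.mem_div.1 hs
  obtain ⟨A, hA, B, hB, hAB⟩ := Filter.mem_mul.1 (h.mul_le hU)
  obtain ⟨C, hC, D, hD, hCD⟩ := Filter.mem_mul.1 (h.mul_le hV)
  obtain ⟨a, p, ⟨⟨⟨-, hpB⟩, -⟩, -⟩, q, ⟨⟨-, hqC⟩, -⟩, ⟨-, hD'⟩, ⟨⟨⟨hA', -⟩, -⟩, -⟩⟩ :=
    hxy _ (inter_mem (inter_mem (inter_mem (h.tendsto_conj x⁻¹ hA) hB) hC) hD)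
  refine hUV ⟨_, hAB (mul_mem_mul hA' hpB), _, hCD (mul_mem_mul hqC hD'), ?_⟩
  rw [div_eq_iff_eq_mul]
  group

end IsSubordinate

variable [TopologicalSpace G] [ContinuousMul G]

theorem exists_isSubordinate_principal (hHs : HsCountable G) (hB : OmegaBalanced G) {U : Set G}
    (hU : U ∈ 𝓝 1) :
    ∃ 𝓖 : Filter G, 𝓖.IsCountablyGenerated ∧ 𝓝 1 ≤ 𝓖 ∧ IsSubordinate 𝓖 (𝓟 U) := by
  obtain ⟨A, hA, h1A, hAU⟩ := exists_open_nhds_one_mul_subset hU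
  obtain ⟨B, hB, hBU⟩ := hB U hU
  obtain ⟨C, hC, hCU⟩ := hHs U hU
  refine ⟨𝓟 A ⊓ ⨅ n, 𝓟 (B n ∩ C n), inferInstance, ?_, ?_, fun g => ?_, ?_⟩
  · refine le_inf (le_principal_iff.2 (hA.mem_nhds h1A)) (le_iInf fun n => le_principal_iff.2 ?_)
    exact inter_mem ((hB n).1.mem_nhds (hB n).2) ((hC n).1.mem_nhds (hC n).2)
  · exact le_principal_iff.2 <| mem_of_superset (Filter.mul_mem_mul
      (mem_inf_of_left (mem_principal_self A)) (mem_inf_of_left (mem_principal_self A))) hAU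
  · obtain ⟨n, hn⟩ := hBU g
    exact tendsto_principal.2 <| mem_inf_of_right <| mem_iInf_of_mem n <| mem_principal.2
      fun x hx => hn ⟨x, hx.1, rfl⟩
  · rw [ker_principal]
    refine fun x hx => hCU (mem_iInter.2 fun n => ?_)
    have hCn : C n ∈ 𝓟 A ⊓ ⨅ n, 𝓟 (B n ∩ C n) :=
      mem_inf_of_right <| mem_iInf_of_mem n <| mem_principal.2 inter_subset_right
    rw [← div_eq_mul_inv]
    exact mem_ker.1 hx _ (Filter.div_mem_div hCn hCn)

theorem exists_isSubordinate (hHs : HsCountable G) (hB : OmegaBalanced G) (𝓕 : Filter G)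
    [𝓕.IsCountablyGenerated] (h𝓕 : 𝓝 1 ≤ 𝓕) :
    ∃ 𝓖 : Filter G, 𝓖.IsCountablyGenerated ∧ 𝓝 1 ≤ 𝓖 ∧ IsSubordinate 𝓖 𝓕 := by
  obtain ⟨U, hU⟩ := 𝓕.exists_antitone_basis
  choose 𝓖 hcg h𝓖 hsub using fun n =>
    exists_isSubordinate_principal hHs hB (h𝓕 (hU.mem n))
  refine ⟨⨅ n, 𝓖 n, inferInstance, le_iInf h𝓖, ?_⟩
  rw [hU.toHasBasis.eq_iInf]
  simpa only [iInf_true] using IsSubordinate.iInf hsub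

theorem exists_isSubordinate_self_le (hHs : HsCountable G) (hB : OmegaBalanced G) (𝓔 : Filter G)
    [𝓔.IsCountablyGenerated] (h𝓔 : 𝓝 1 ≤ 𝓔) :
    ∃ 𝓕 ≤ 𝓔, 𝓕.IsCountablyGenerated ∧ 𝓝 1 ≤ 𝓕 ∧ IsSubordinate 𝓕 𝓕 := by
  have refine_once (𝓖 : {𝓖 : Filter G // 𝓖.IsCountablyGenerated ∧ 𝓝 1 ≤ 𝓖}) :
      ∃ 𝓗 : {𝓗 : Filter G // 𝓗.IsCountablyGenerated ∧ 𝓝 1 ≤ 𝓗}, IsSubordinate 𝓗.1 𝓖.1 := by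
    have := 𝓖.2.1
    obtain ⟨𝓗, hcg, h𝓗, hsub⟩ := exists_isSubordinate hHs hB 𝓖.1 𝓖.2.2
    exact ⟨⟨𝓗, hcg, h𝓗⟩, hsub⟩
  choose next hnext using refine_once
  let 𝓢 (n : ℕ) := next^[n] ⟨𝓔, ‹_›, h𝓔⟩
  have h𝓢 (n : ℕ) : IsSubordinate (𝓢 (n + 1)).1 (𝓢 n).1 := by
    simpa only [𝓢, iterate_succ_apply'] using hnext (𝓢 n)
  have hcg (n : ℕ) := (𝓢 n).2.1
  refine ⟨⨅ n, (𝓢 n).1, iInf_le _ 0, inferInstance, le_iInf fun n => (𝓢 n).2.2, ?_⟩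
  exact (IsSubordinate.iInf h𝓢).mono_left (le_iInf fun n => iInf_le _ (n + 1))

end Subordinate

section WeaklyLindelof

open Filter

theorem WeaklyLindelof.exists_countable_dense_biUnion {X : Type*} [TopologicalSpace X]
    (hX : WeaklyLindelof X) {W : X → Set X} (hW : ∀ x, W x ∈ 𝓝 x) :
    ∃ D : Set X, D.Countable ∧ Dense (⋃ x ∈ D, W x) := by
  obtain ⟨𝒱, h𝒱, hcount, hdense⟩ := hX (range fun x => interior (W x))
    (by rintro _ ⟨x, rfl⟩; exact isOpen_interior)
    (eq_univ_of_forall fun x => ⟨_, ⟨x, rfl⟩, mem_interior_iff_mem_nhds.2 (hW x)⟩)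
  choose c hc using h𝒱
  have := hcount.to_subtype
  refine ⟨range fun V : 𝒱 => c V.2, countable_range _, hdense.mono ?_⟩
  refine sUnion_subset fun V hV => ?_
  rw [← hc hV]
  exact interior_subset.trans (subset_biUnion_of_mem (u := W) (mem_range_self (⟨V, hV⟩ : 𝒱)))

variable {G : Type*} [Group G] [TopologicalSpace G]

theorem preimage_inv_mul_mem_nhds [SeparatelyContinuousMul G] {U : Set G} (hU : U ∈ 𝓝 1) (x : G) :
    (x⁻¹ * ·) ⁻¹' U ∈ 𝓝 x :=
  (continuous_const_mul x⁻¹).continuousAt.preimage_mem_nhds (by rwa [inv_mul_cancel])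

theorem preimage_mul_inv_mem_nhds [SeparatelyContinuousMul G] {U : Set G} (hU : U ∈ 𝓝 1) (x : G) :
    (· * x⁻¹) ⁻¹' U ∈ 𝓝 x :=
  (continuous_mul_const x⁻¹).continuousAt.preimage_mem_nhds (by rwa [mul_inv_cancel])

/-- A coset is determined by the countably many codes `(n, a)` such that `x` is `Vₙ`-close, up to an
error in `Vₙ`, to the member `a` of a countable set that is dense at scale `Vₙ`. -/
theorem IsSubordinate.small_quotient [SeparatelyContinuousMul G] (hG : WeaklyLindelof G)
    {𝓕 : Filter G} [NeBot 𝓕] [𝓕.IsCountablyGenerated] (h𝓕 : 𝓝 1 ≤ 𝓕) (h : IsSubordinate 𝓕 𝓕) :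
    Small.{w} (G ⧸ h.kerSubgroup) := by
  obtain ⟨V, hV⟩ := 𝓕.exists_antitone_basis
  have hV1 (n : ℕ) : V n ∈ 𝓝 1 := h𝓕 (hV.mem _)
  let W (n : ℕ) (a : G) : Set G := (a⁻¹ * ·) ⁻¹' V n ∩ (· * a⁻¹) ⁻¹' V n
  have hW (n : ℕ) (a : G) : W n a ∈ 𝓝 a :=
    inter_mem (preimage_inv_mul_mem_nhds (hV1 n) a) (preimage_mul_inv_mem_nhds (hV1 n) a)
  choose D hD hdense using fun n => hG.exists_countable_dense_biUnion (hW n)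
  have (n : ℕ) : Countable (D n) := (hD n).to_subtype
  let code (x : G) : Set (Σ n, D n) := {i | ∃ p ∈ V i.1, x * p ∈ W i.1 i.2}
  have code_nonempty (x : G) (n : ℕ) : ∃ a : D n, ⟨n, a⟩ ∈ code x := by
    obtain ⟨z, hz, hxz⟩ := (hdense n).inter_nhds_nonempty (preimage_inv_mul_mem_nhds (hV1 n) x)
    obtain ⟨a, ha, hza⟩ := mem_iUnion₂.1 hz
    exact ⟨⟨a, ha⟩, x⁻¹ * z, hxz, by rwa [mul_inv_cancel_left]⟩
  have code_injective {x y : G} (hxy : code x = code y) : x⁻¹ * y ∈ h.kerSubgroup := by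
    refine h.inv_mul_mem_ker fun U hU => ?_
    obtain ⟨n, hn⟩ := hV.mem_iff.1 hU
    obtain ⟨a, hx⟩ := code_nonempty x n
    obtain ⟨q, hq, hyq⟩ : ⟨n, a⟩ ∈ code y := hxy ▸ hx
    obtain ⟨p, hp, hxp⟩ := hx
    exact ⟨a, p, hn hp, q, hn hq, hn hxp.1, hn hyq.2⟩
  refine small_of_injective (f := fun x : G ⧸ h.kerSubgroup => code x.out) fun x y hxy => ?_
  simpa only [← QuotientGroup.eq, QuotientGroup.out_eq'] using code_injective hxy

theorem WeaklyLindelof.exists_filter_dist_apply_mul_le [ContinuousMul G] {Y : Type*}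
    [PseudoMetricSpace Y] (hG : WeaklyLindelof G) {f : G → Y} (hf : Continuous f) {ε : ℝ}
    (hε : 0 < ε) :
    ∃ 𝓕 : Filter G, 𝓕.IsCountablyGenerated ∧ 𝓝 1 ≤ 𝓕 ∧
      ∀ n ∈ 𝓕.ker, ∀ x, dist (f (x * n)) (f x) ≤ ε := by
  have local_bound (x : G) : ∃ U : Set G, IsOpen U ∧ 1 ∈ U ∧
      ∀ a ∈ U, ∀ b ∈ U, dist (f (x * (a * b))) (f x) < ε / 2 := by
    have hnear : {z | dist (f (x * z)) (f x) < ε / 2} ∈ 𝓝 1 :=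
      (isOpen_lt (by fun_prop) continuous_const).mem_nhds (by simpa using hε)
    obtain ⟨U, hU, h1U, hUU⟩ := exists_open_nhds_one_mul_subset hnear
    exact ⟨U, hU, h1U, fun a ha b hb => hUU (mul_mem_mul ha hb)⟩
  choose U hU h1U hdist using local_bound
  have hU1 (x : G) : U x ∈ 𝓝 1 := (hU x).mem_nhds (h1U x)
  obtain ⟨D, hD, hdense⟩ := hG.exists_countable_dense_biUnion
    fun x => preimage_inv_mul_mem_nhds (hU1 x) x
  refine ⟨⨅ s ∈ U '' D, 𝓟 s, isCountablyGenerated_biInf_principal (hD.image U), ?_, ?_⟩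
  · exact le_iInf₂ fun s ⟨x, _, hs⟩ => le_principal_iff.2 (hs ▸ hU1 x)
  · intro n hn
    have hclosed : IsClosed {x | dist (f (x * n)) (f x) ≤ ε} :=
      isClosed_le (by fun_prop) continuous_const
    suffices ⋃ a ∈ D, (a⁻¹ * ·) ⁻¹' U a ⊆ {x | dist (f (x * n)) (f x) ≤ ε} from fun x =>
      hclosed.closure_subset_iff.2 this (hdense x)
    refine iUnion₂_subset fun a ha x hx => ?_
    have hna : n ∈ U a := mem_ker.1 hn _ <|
      mem_iInf_of_mem (U a) <| mem_iInf_of_mem (mem_image_of_mem U ha) <| mem_principal_self _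
    have hxn := hdist a _ hx n hna
    have hx1 := hdist a _ hx 1 (h1U a)
    rw [mul_one, mul_inv_cancel_left] at hx1
    rw [mul_assoc, mul_inv_cancel_left] at hxn
    exact (dist_triangle_right _ _ (f a)).trans (by linarith)

theorem WeaklyLindelof.exists_filter_apply_mul_eq [ContinuousMul G] {Y : Type*}
    [TopologicalSpace Y] [MetrizableSpace Y] (hG : WeaklyLindelof G) {f : G → Y}
    (hf : Continuous f) :
    ∃ 𝓕 : Filter G, 𝓕.IsCountablyGenerated ∧ 𝓝 1 ≤ 𝓕 ∧ ∀ n ∈ 𝓕.ker, ∀ x, f (x * n) = f x := by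
  let := metrizableSpaceMetric Y
  choose 𝓕 hcg h𝓕 hdist using fun k : ℕ =>
    hG.exists_filter_dist_apply_mul_le hf (Nat.one_div_pos_of_nat (α := ℝ) (n := k))
  refine ⟨⨅ k, 𝓕 k, inferInstance, le_iInf h𝓕, fun n hn x => eq_of_forall_dist_le fun ε hε => ?_⟩
  obtain ⟨k, hk⟩ := exists_nat_one_div_lt hε
  exact (hdist k n (ker_mono (iInf_le 𝓕 k) hn) x).trans hk.le

end WeaklyLindelof

section Semiregularization

/-- The semiregularization of a space `X`: the same points with the coarser topology generated by
the regular open sets, which are the interiors of closed sets. It is a one-field structure, to keep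
the two topologies apart. -/
structure Semiregularization (X : Type*) where
  of ::
  val : X

namespace Semiregularization

variable {X Y : Type*}

/-- The bijection between the points of a space and of its semiregularization. -/
def equiv : Semiregularization X ≃ X := ⟨val, of, fun _ => rfl, fun _ => rfl⟩

instance [Group X] : Group (Semiregularization X) := equiv.group

/-- The identity, as an isomorphism from a group onto its semiregularization. -/
def ofMulEquiv [Group X] : X ≃* Semiregularization X := equiv.mulEquiv.symm

variable [TopologicalSpace X] [TopologicalSpace Y]

instance : TopologicalSpace (Semiregularization X) :=
  generateFrom {V | ∃ C : Set X, IsClosed C ∧ val ⁻¹' interior C = V}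

theorem isTopologicalBasis :
    IsTopologicalBasis {V | ∃ C : Set X, IsClosed C ∧ val ⁻¹' interior C = V} := by
  refine isTopologicalBasis_of_subbasis_of_finiteInter rfl ⟨⟨univ, isClosed_univ, by simp⟩, ?_⟩
  rintro _ ⟨C, hC, rfl⟩ _ ⟨D, hD, rfl⟩
  exact ⟨C ∩ D, hC.inter hD, by rw [interior_inter, preimage_inter]⟩

theorem isOpen_preimage_interior {C : Set X} (hC : IsClosed C) : IsOpen (val ⁻¹' interior C) :=
  (isTopologicalBasis (X := X)).isOpen ⟨C, hC, rfl⟩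

theorem isClosed_preimage_closure {U : Set X} (hU : IsOpen U) : IsClosed (val ⁻¹' closure U) := by
  rw [← isOpen_compl_iff, ← preimage_compl, ← interior_compl]
  exact isOpen_preimage_interior hU.isClosed_compl

theorem mem_nhds_iff {x : Semiregularization X} {s : Set (Semiregularization X)} :
    s ∈ 𝓝 x ↔ ∃ C ∈ 𝓝 x.val, IsClosed C ∧ val ⁻¹' interior C ⊆ s := by
  rw [isTopologicalBasis.mem_nhds_iff]
  constructor
  · rintro ⟨_, ⟨C, hC, rfl⟩, hx, hs⟩
    exact ⟨C, mem_interior_iff_mem_nhds.1 (mem_preimage.1 hx), hC, hs⟩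
  · rintro ⟨C, hx, hC, hs⟩
    exact ⟨_, ⟨C, hC, rfl⟩, mem_preimage.2 (mem_interior_iff_mem_nhds.2 hx), hs⟩

theorem preimage_interior_closure_mem_nhds {U : Set X} (hU : IsOpen U) {x : Semiregularization X}
    (hx : x.val ∈ U) : val ⁻¹' interior (closure U) ∈ 𝓝 x :=
  (isOpen_preimage_interior isClosed_closure).mem_nhds (interior_maximal subset_closure hU hx)

theorem continuous_of : Continuous (of : X → Semiregularization X) := by
  refine isTopologicalBasis.continuous_iff.2 ?_
  rintro _ ⟨C, -, rfl⟩
  exact isOpen_interior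

theorem image_of_subset_interior_closure {O : Set X} (hO : IsOpen O) :
    of '' O ⊆ interior (closure (of '' O)) := by
  have hclosure : val ⁻¹' interior (closure O) ⊆ closure (of '' O) := fun x hx =>
    image_closure_subset_closure_image continuous_of ⟨x.val, interior_subset hx, rfl⟩
  rintro _ ⟨x, hx, rfl⟩
  exact mem_interior_iff_mem_nhds.2 <|
    Filter.mem_of_superset (preimage_interior_closure_mem_nhds hO hx) hclosure

theorem continuous_of_comp_val {f : X → Y} (hf : Continuous f) (hf' : IsOpenMap f) :
    Continuous fun x => of (f (val x)) := by
  refine isTopologicalBasis.continuous_iff.2 ?_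
  rintro _ ⟨C, hC, rfl⟩
  change IsOpen (val ⁻¹' (f ⁻¹' interior C))
  rw [hf'.preimage_interior_eq_interior_preimage hf]
  exact isOpen_preimage_interior (hC.preimage hf)

theorem continuous_comp_val [RegularSpace Y] {f : X → Y} (hf : Continuous f) :
    Continuous fun x => f (val x) := by
  refine continuous_iff_continuousAt.2 fun x => ?_
  refine (closed_nhds_basis _).tendsto_right_iff.2 fun C ⟨hC, hC'⟩ => ?_
  exact mem_nhds_iff.2 ⟨f ⁻¹' C, hf.continuousAt hC, hC'.preimage hf,
    preimage_mono interior_subset⟩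

theorem continuous_of_prodMk_val :
    Continuous fun z : Semiregularization X × Semiregularization Y => of (z.1.val, z.2.val) := by
  refine continuous_iff_continuousAt.2 fun z s hs => ?_
  obtain ⟨C, hCz, hC, hCs⟩ := mem_nhds_iff.1 hs
  obtain ⟨U, V, hU, hzU, hV, hzV, hUV⟩ := mem_nhds_prod_iff'.1 hCz
  have hUV' : interior (closure U) ×ˢ interior (closure V) ⊆ interior C := by
    rw [← interior_prod_eq, ← closure_prod_eq]
    exact interior_mono (closure_minimal hUV hC)
  exact Filter.mem_of_superset (prod_mem_nhds (preimage_interior_closure_mem_nhds hU hzU)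
    (preimage_interior_closure_mem_nhds hV hzV)) fun w hw => hCs (hUV' hw)

instance [T2Space X] : T2Space (Semiregularization X) := by
  refine ⟨fun x y hxy => ?_⟩
  obtain ⟨U, V, hU, hV, hxU, hyV, hUV⟩ := t2_separation (equiv.injective.ne hxy)
  refine ⟨_, _, isOpen_preimage_interior isClosed_closure,
    isOpen_preimage_interior isClosed_closure,
    interior_maximal subset_closure hU hxU, interior_maximal subset_closure hV hyV, ?_⟩
  exact (((hUV.closure_left hV).mono_left interior_subset).closure_right
    isOpen_interior).mono_right interior_subset |>.preimage _

theorem isGδ_singleton {x : X} {𝓖 : Filter X} [𝓖.IsCountablyGenerated] (h𝓖 : 𝓝 x ≤ 𝓖)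
    (hx : ∀ y ≠ x, Disjoint (𝓝 y) 𝓖) : IsGδ {of x} := by
  obtain ⟨V, hV⟩ := 𝓖.exists_antitone_basis
  have hVx (n : ℕ) : closure (V n) ∈ 𝓝 x :=
    Filter.mem_of_superset (h𝓖 (hV.mem _)) subset_closure
  have hinter : {of x} = ⋂ n, val ⁻¹' interior (closure (V n)) := by
    refine Subset.antisymm (singleton_subset_iff.2 <| mem_iInter.2 fun n =>
      mem_preimage.2 <| mem_interior_iff_mem_nhds.2 (hVx n)) fun y hy => ?_
    by_contra hyx
    obtain ⟨A, hA, B, hB, hAB⟩ := Filter.disjoint_iff.1 (hx y.val fun h => hyx (congrArg of h))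
    obtain ⟨n, hn⟩ := hV.mem_iff.1 hB
    obtain ⟨z, hzA, hzV⟩ := mem_closure_iff_nhds.1 (interior_subset (mem_iInter.1 hy n)) A hA
    exact hAB.notMem_of_mem_left hzA (hn hzV)
  rw [hinter]
  exact .iInter_of_isOpen fun n => isOpen_preimage_interior isClosed_closure

section Group

variable {G : Type*} [Group G] [TopologicalSpace G] [ContinuousMul G]

instance : ContinuousMul (Semiregularization G) := by
  have hmul : IsOpenMap fun z : G × G => z.1 * z.2 := by
    refine .of_sections fun z => ⟨fun y => (z.1, z.1⁻¹ * y), by fun_prop, ?_, fun y => ?_⟩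
    · simp only [inv_mul_cancel_left]
    · simp only [mul_inv_cancel_left]
  exact ⟨(continuous_of_comp_val continuous_mul hmul).comp continuous_of_prodMk_val⟩

instance : RegularSpace (Semiregularization G) := by
  refine .of_exists_mem_nhds_isClosed_subset fun x s hs => ?_
  obtain ⟨C, hCx, hC, hCs⟩ := mem_nhds_iff.1 hs
  obtain ⟨U, V, hU, hxU, hV, h1V, hUV⟩ := mem_nhds_prod_iff'.1
    (continuous_mul.continuousAt.preimage_mem_nhds (x := (x.val, 1)) (by rwa [mul_one]))
  have hUVC : closure U * V ⊆ interior C := by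
    refine interior_maximal ?_ hV.mul_left
    refine mul_subset_iff.2 fun a ha b hb => hC.closure_subset ?_
    exact map_mem_closure (f := (· * b)) (continuous_mul_const b) ha
      fun c hc => hUV (mk_mem_prod hc hb)
  refine ⟨val ⁻¹' closure U, ?_, isClosed_preimage_closure hU, fun y hy => hCs ?_⟩
  · exact Filter.mem_of_superset (preimage_interior_closure_mem_nhds hU hxU)
      (preimage_mono interior_subset)
  · exact hUVC ⟨y.val, hy, 1, h1V, mul_one _⟩

end Group

end Semiregularization

end Semiregularization

section OpenQuotient

open Filter

variable {G H : Type*} [Group G] [TopologicalSpace G] [Group H] [TopologicalSpace H] {p : G →* H}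

theorem exists_continuous_comp_eq_of_isOpenQuotientMap (hp : IsOpenQuotientMap p)
    {Y : Type*} [TopologicalSpace Y] {f : G → Y} (hf : Continuous f)
    (hfp : ∀ n ∈ p.ker, ∀ x, f (x * n) = f x) :
    ∃ g : H → Y, Continuous g ∧ g ∘ p = f := by
  have hfactor (x : G) : f (surjInv hp.surjective (p x)) = f x := by
    have hmem : x⁻¹ * surjInv hp.surjective (p x) ∈ p.ker := by
      rw [p.mem_ker, map_mul, map_inv, surjInv_eq hp.surjective, inv_mul_cancel]
    simpa only [mul_inv_cancel_left] using hfp _ hmem x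
  have hcomp : (f ∘ surjInv hp.surjective) ∘ p = f := funext hfactor
  exact ⟨f ∘ surjInv hp.surjective, hp.continuous_comp_iff.1 (hcomp.symm ▸ hf), hcomp⟩

theorem continuousMul_of_isOpenQuotientMap [ContinuousMul G] (hp : IsOpenQuotientMap p) :
    ContinuousMul H := by
  refine ⟨(hp.prodMap hp).continuous_comp_iff.1 ?_⟩
  convert! hp.continuous.comp continuous_mul using 1
  exact funext fun z => (map_mul p z.1 z.2).symm

variable [SeparatelyContinuousMul G]

theorem nhds_le_map_of_isOpenQuotientMap (hp : IsOpenQuotientMap p) {𝓕 : Filter G} (h𝓕 : 𝓝 1 ≤ 𝓕)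
    (x : G) : 𝓝 (p x) ≤ map (fun a => p (x * a)) 𝓕 := by
  have hx : map (x * ·) (𝓝 1) = 𝓝 x := by
    simpa only [mul_one, Homeomorph.coe_mulLeft] using (Homeomorph.mulLeft x).map_nhds_eq 1
  rw [← hp.map_nhds_eq, ← hx, map_map]
  exact map_mono h𝓕

namespace IsSubordinate

variable {𝓕 : Filter G} [NeBot 𝓕]

theorem t2Space (h : IsSubordinate 𝓕 𝓕) (h𝓕 : 𝓝 1 ≤ 𝓕) (hp : IsOpenQuotientMap p)
    (hker : (p.ker : Set G) = 𝓕.ker) : T2Space H := by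
  refine t2Space_iff_disjoint_nhds.2 (hp.surjective.forall₂.2 fun x y hxy => ?_)
  exact (h.disjoint_map hker hxy).mono (nhds_le_map_of_isOpenQuotientMap hp h𝓕 x)
    (nhds_le_map_of_isOpenQuotientMap hp h𝓕 y)

theorem isGδ_singleton_one [𝓕.IsCountablyGenerated] (h : IsSubordinate 𝓕 𝓕) (h𝓕 : 𝓝 1 ≤ 𝓕)
    (hp : IsOpenQuotientMap p) (hker : (p.ker : Set G) = 𝓕.ker) :
    IsGδ {(1 : Semiregularization H)} := by
  have hnhds (x : G) := nhds_le_map_of_isOpenQuotientMap hp h𝓕 x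
  refine Semiregularization.isGδ_singleton (𝓖 := map (fun a => p (1 * a)) 𝓕)
    (by simpa only [map_one] using hnhds 1) (hp.surjective.forall.2 fun x hx => ?_)
  exact (h.disjoint_map hker (by rwa [map_one])).mono_left (hnhds x)

theorem exists_isOpenQuotientMap (h : IsSubordinate 𝓕 𝓕) [Small.{w} (G ⧸ h.kerSubgroup)] :
    ∃ (H : Type w) (_ : Group H) (_ : TopologicalSpace H) (p : G →* H),
      IsOpenQuotientMap p ∧ (p.ker : Set G) = 𝓕.ker := by
  let e : G ⧸ h.kerSubgroup ≃* Shrink.{w} (G ⧸ h.kerSubgroup) := Shrink.mulEquiv.symm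
  refine ⟨_, inferInstance, inferInstance, e.toMonoidHom.comp (QuotientGroup.mk' h.kerSubgroup),
    (Shrink.homeomorph (G ⧸ h.kerSubgroup)).isOpenQuotientMap.comp
      QuotientGroup.isOpenQuotientMap_mk, ?_⟩
  rw [MulEquiv.toMonoidHom_eq_coe, MonoidHom.ker_mulEquiv_comp, QuotientGroup.ker_mk']
  rfl

end IsSubordinate

end OpenQuotient

theorem statement4_general {G : Type*} [Group G] [TopologicalSpace G] [ContinuousMul G]
    (hWL : WeaklyLindelof G) (hHs : HsCountable G) (hB : OmegaBalanced G) {Y : Type*}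
    [TopologicalSpace Y] [MetrizableSpace Y] {f : G → Y} (hf : Continuous f) :
    ∃ (K : Type w) (gK : Group K) (tK : TopologicalSpace K),
      letI := gK
      letI := tK
      ContinuousMul K ∧ T1Space K ∧ RegularSpace K ∧
        (∃ W : ℕ → Set K, (∀ n, IsOpen (W n)) ∧ ({(1 : K)} : Set K) = ⋂ n, W n) ∧
        ∃ π : G →* K, Continuous π ∧ Surjective π ∧
          (∀ O : Set G, IsOpen O → ⇑π '' O ⊆ interior (closure (⇑π '' O))) ∧
          ∃ h : K → Y, Continuous h ∧ f = h ∘ π := by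
  obtain ⟨𝓔, _, h𝓔, hf𝓔⟩ := hWL.exists_filter_apply_mul_eq hf
  obtain ⟨𝓕, h𝓕𝓔, _, h𝓕, hsub⟩ := exists_isSubordinate_self_le hHs hB 𝓔 h𝓔
  have : 𝓕.NeBot := Filter.neBot_of_le h𝓕
  have : Small.{w} (G ⧸ hsub.kerSubgroup) := hsub.small_quotient hWL h𝓕
  obtain ⟨H, _, _, p, hp, hker⟩ := hsub.exists_isOpenQuotientMap
  have : ContinuousMul H := continuousMul_of_isOpenQuotientMap hp
  have : T2Space H := hsub.t2Space h𝓕 hp hker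
  obtain ⟨g, hg, rfl⟩ := exists_continuous_comp_eq_of_isOpenQuotientMap hp hf fun n hn =>
    hf𝓔 n (Filter.ker_mono h𝓕𝓔 (hker.subset hn))
  refine ⟨Semiregularization H, inferInstance, inferInstance, inferInstance, inferInstance,
    inferInstance, ?_, Semiregularization.ofMulEquiv.toMonoidHom.comp p,
    Semiregularization.continuous_of.comp hp.continuous,
    Semiregularization.ofMulEquiv.surjective.comp hp.surjective, fun O hO => ?_,
    _, Semiregularization.continuous_comp_val hg, rfl⟩
  · exact isGδ_iff_eq_iInter_nat.1 (hsub.isGδ_singleton_one h𝓕 hp hker)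
  · rw [MonoidHom.coe_comp, image_comp]
    exact Semiregularization.image_of_subset_interior_closure (hp.isOpenMap O hO)

/-- For a Hausdorff weakly Lindelöf ω-balanced paratopological group with Hs(G) ≤ ω, every
continuous real-valued function factors through a continuous d-open surjective homomorphism
onto a regular paratopological group of countable pseudocharacter. -/
theorem statement4 (G : Type*) [Group G] [TopologicalSpace G] [ContinuousMul G] [T2Space G]
    (hWL : WeaklyLindelof G) (hHs : HsCountable G) (hB : OmegaBalanced G) :
    ∀ f : G → ℝ, Continuous f →
      ∃ (K : Type) (gK : Group K) (tK : TopologicalSpace K),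
        letI := gK
        letI := tK
        ContinuousMul K ∧ T1Space K ∧ RegularSpace K ∧
          (∃ W : ℕ → Set K, (∀ n, IsOpen (W n)) ∧ ({(1 : K)} : Set K) = ⋂ n, W n) ∧
          ∃ π : G →* K, Continuous π ∧ Surjective π ∧
            (∀ O : Set G, IsOpen O → ⇑π '' O ⊆ interior (closure (⇑π '' O))) ∧
            ∃ h : K → ℝ, Continuous h ∧ f = h ∘ π :=
  fun _ hf => statement4_general hWL hHs hB hf
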